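/- Let Σ₂ = {0,1}^ℕ be the full one-sided shift with the shift map σ, and let X_∞ ⊆ Σ₂ be the set of sequences containing at most one symbol 1. Then X_∞ is a closed shift-invariant set which is internally chain transitive for σ: for every δ > 0 and any two points ξ, η ∈ X_∞, there is a finite δ-pseudo-orbit contained in X_∞ starting at ξ and ending at η. -/

import Mathlib

/-!
A point of `Xinf` is eventually zero, so its orbit reaches the fixed point `0^∞`. Every
`η ∈ Xinf` has preimages `0^N η` in `Xinf` that are as close to `0^∞` as desired, and
`N` shifts bring `0^N η` to `η`. Hence a pseudo-orbit from `ξ` to `η` follows `ξ` to `0^∞`,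
makes a single jump to `0^N η` with `2^{-N} < δ`, and then follows a true orbit.
-/

/-- The full one-sided shift space `Σ₂ = {0,1}^ℕ` (with `true` playing the role of `1`). -/
abbrev Sigma2 : Type := ℕ → Bool

/-- The shift map on `Σ₂`. -/
def shiftMap : Sigma2 → Sigma2 := fun ξ n => ξ (n + 1)

/- The standard metric on `Σ₂`: `d(ξ,η) = 2^{-min{n : ξ_n ≠ η_n}}`, `d(ξ,ξ) = 0`. -/
open Classical in
noncomputable def shiftDist (ξ η : Sigma2) : ℝ :=
  if h : ξ = η then 0 else (1 / 2 : ℝ) ^ Nat.find (Function.ne_iff.mp h)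

/-- The set of sequences with at most one occurrence of the symbol `1`. -/
def Xinf : Set Sigma2 := {ξ | ∀ m n : ℕ, ξ m = true → ξ n = true → m = n}

theorem shiftDist_le_of_agree {ξ η : Sigma2} {N : ℕ} (h : ∀ n < N, ξ n = η n) :
    shiftDist ξ η ≤ (1 / 2 : ℝ) ^ N := by
  classical
  unfold shiftDist
  split_ifs with hne
  · positivity
  · apply pow_le_pow_of_le_one (by norm_num) (by norm_num)
    rw [Nat.le_find_iff]
    intro m hm
    simpa using h m hm

theorem Xinf_isClosed : IsClosed Xinf := by
  have hX : Xinf = ⋂ (m : ℕ) (n : ℕ), {ξ : Sigma2 | (ξ m, ξ n) ∈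
      {p : Bool × Bool | p.1 = true → p.2 = true → m = n}} := by
    ext ξ
    simp [Xinf]
  rw [hX]
  refine isClosed_iInter fun m => isClosed_iInter fun n => ?_
  exact (isClosed_discrete _).preimage
    ((continuous_apply m).prodMk (continuous_apply n))

theorem Xinf_eventually_false {ξ : Sigma2} (hξ : ξ ∈ Xinf) :
    ∃ K : ℕ, ∀ n > K, ξ n = false := by
  by_cases h : ∃ k, ξ k = true
  · obtain ⟨k, hk⟩ := h
    refine ⟨k, fun n hn => ?_⟩
    by_contra hc
    have := hξ n k (by simpa using hc) hk
    omega
  · exact ⟨0, fun n _ => by simpa using fun hc => h ⟨n, hc⟩⟩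

/-- The pseudo-orbit from `ξ` to `η`: the orbit of `ξ` up to time `K`, and from time `K + 1`
on the orbit of `0^N η`, which reaches `η` at time `l = K + 1 + N`. For `K < i ≤ l` the term
is `0^(l - i) η`. -/
def joinOrbit (ξ η : Sigma2) (K l : ℕ) : ℕ → Sigma2 := fun i n =>
  if i ≤ K then ξ (n + i) else if l ≤ n + i then η (n + i - l) else false

theorem joinOrbit_mem {ξ η : Sigma2} (hξ : ξ ∈ Xinf) (hη : η ∈ Xinf) (K l i : ℕ) :
    joinOrbit ξ η K l i ∈ Xinf := by
  intro m n hm hn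
  unfold joinOrbit at hm hn
  split_ifs at hm hn
  · have := hξ _ _ hm hn
    omega
  · have := hη _ _ hm hn
    omega

theorem shiftMap_joinOrbit_of_ne {ξ η : Sigma2} {K l i : ℕ} (hi : i ≠ K) :
    shiftMap (joinOrbit ξ η K l i) = joinOrbit ξ η K l (i + 1) := by
  funext n
  have h : i ≤ K ↔ i + 1 ≤ K := by omega
  simp only [shiftMap, joinOrbit, h, show n + 1 + i = n + (i + 1) by omega]

/-- `X_∞` is a closed shift-invariant subset of `Σ₂` which is
internally chain transitive for the shift map: for every `δ > 0` and all `ξ, η ∈ X_∞`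
there is a finite `δ`-pseudo-orbit in `X_∞` from `ξ` to `η`. -/
theorem Xinf_closed_invariant_ict :
    IsClosed Xinf ∧ Set.MapsTo shiftMap Xinf Xinf ∧
    ∀ δ : ℝ, 0 < δ → ∀ ξ ∈ Xinf, ∀ η ∈ Xinf,
      ∃ (l : ℕ) (c : ℕ → Sigma2), c 0 = ξ ∧ c l = η ∧ (∀ i ≤ l, c i ∈ Xinf) ∧
        ∀ i < l, shiftDist (shiftMap (c i)) (c (i + 1)) < δ := by
  refine ⟨Xinf_isClosed, ?_, ?_⟩
  · intro ξ hξ m n hm hn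
    have := hξ (m + 1) (n + 1) hm hn
    omega
  intro δ hδ ξ hξ η hη
  obtain ⟨N, hN⟩ := exists_pow_lt_of_lt_one hδ (by norm_num : (1 / 2 : ℝ) < 1)
  obtain ⟨K, hK⟩ := Xinf_eventually_false hξ
  refine ⟨K + 1 + N, joinOrbit ξ η K (K + 1 + N), ?_, ?_,
    fun i _ => joinOrbit_mem hξ hη _ _ i, fun i _ => ?_⟩
  · funext n
    simp [joinOrbit]
  · funext n
    simp [joinOrbit, show ¬ K + 1 + N ≤ K by omega]
  · refine lt_of_le_of_lt (shiftDist_le_of_agree fun n hn => ?_) hN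
    by_cases hi : i = K
    · -- The jump: both sequences begin with `N` zeros.
      subst hi
      simp [shiftMap, joinOrbit, hK (n + 1 + i) (by omega),
        show ¬ i + 1 + N ≤ n + (i + 1) by omega]
    · rw [shiftMap_joinOrbit_of_ne hi]
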